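/- arXiv:1912.10863 — 2 statements merged into one kernel-verified Lean document; each statement's English description precedes it below -/
import Mathlib

section
/- Let (g_t)_{t∈[0,1]} be a smooth isotopy in Symp(D) with g_0 = id, let f_t be the associated normalized Hamiltonian functions vanishing on ∂D, let R((g_t)) = ∫₀¹ (∫_D f_t dx dy) dt, and let φ̃ be the lift of the boundary isotopy with φ̃_0 = id. Then the limit τ̄(g₁) = lim_{n→∞} τ_λ(g₁ⁿ)/n exists and τ̄(g₁) + 2·R((g_t)) = π²·rot̃(φ̃₁), where rot̃(φ̃₁) = lim_{n→∞} φ̃₁ⁿ(0)/(2πn) is the translation number. -/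
open MeasureTheory Filter Topology Set Function Real

noncomputable section

/-- The closed unit disk in `ℝ²`. -/
def disk : Set (ℝ × ℝ) := {p | p.1 ^ 2 + p.2 ^ 2 ≤ 1}

/-- The boundary circle of the unit disk. -/
def bdry : Set (ℝ × ℝ) := {p | p.1 ^ 2 + p.2 ^ 2 = 1}

/-- Partial derivative in the `x`-direction. -/
def pdx (f : ℝ × ℝ → ℝ) (p : ℝ × ℝ) : ℝ := fderiv ℝ f p (1, 0)

/-- Partial derivative in the `y`-direction. -/
def pdy (f : ℝ × ℝ → ℝ) (p : ℝ × ℝ) : ℝ := fderiv ℝ f p (0, 1)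

/-- The Jacobian determinant of a map `ℝ² → ℝ²`. -/
def jacDet (g : ℝ × ℝ → ℝ × ℝ) (p : ℝ × ℝ) : ℝ :=
  pdx (fun q => (g q).1) p * pdy (fun q => (g q).2) p -
    pdy (fun q => (g q).1) p * pdx (fun q => (g q).2) p

/-- `g` represents an element of `Symp(D)`: a `C^∞` diffeomorphism of the closed
unit disk onto itself (smooth up to the boundary, i.e. the restriction of a
globally smooth map with globally smooth inverse on the disk) whose Jacobian
determinant is identically `1` on the disk. -/
def IsSymp (g : ℝ × ℝ → ℝ × ℝ) : Prop :=
  ContDiff ℝ (⊤ : ℕ∞) g ∧ MapsTo g disk disk ∧ (∀ p ∈ disk, jacDet g p = 1) ∧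
    ∃ g' : ℝ × ℝ → ℝ × ℝ, ContDiff ℝ (⊤ : ℕ∞) g' ∧ MapsTo g' disk disk ∧
      (∀ p ∈ disk, g' (g p) = p) ∧ (∀ p ∈ disk, g (g' p) = p)

/-- `g` represents an element of `G_o`: a symplectomorphism of the disk fixing the origin. -/
def IsSympO (g : ℝ × ℝ → ℝ × ℝ) : Prop :=
  IsSymp g ∧ g (0, 0) = (0, 0)

/-- `τ_λ(g) = ∫_D g*λ ∧ λ` for `λ = (x dy - y dx)/2`, written out in coordinates. -/
def tauL (g : ℝ × ℝ → ℝ × ℝ) : ℝ :=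
  (1 / 4) * ∫ p in disk,
    (p.1 * ((g p).1 * pdx (fun q => (g q).2) p - (g p).2 * pdx (fun q => (g q).1) p) +
     p.2 * ((g p).1 * pdy (fun q => (g q).2) p - (g p).2 * pdy (fun q => (g q).1) p))

/-- `σ(g) = ∫_γ (g*λ - λ)` along the radial path `γ(t) = (t,0)`, in coordinates. -/
def sigmaQ (g : ℝ × ℝ → ℝ × ℝ) : ℝ :=
  (1 / 2) * ∫ t in (0:ℝ)..1,
    ((g (t, 0)).1 * pdx (fun q => (g q).2) (t, 0) -
      (g (t, 0)).2 * pdx (fun q => (g q).1) (t, 0))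

/-- `G` is a smooth isotopy in `Symp(D)` starting at the identity. -/
def IsIsotopy (G : ℝ → ℝ × ℝ → ℝ × ℝ) : Prop :=
  ContDiff ℝ (⊤ : ℕ∞) (fun q : ℝ × (ℝ × ℝ) => G q.1 q.2) ∧
    (∀ t ∈ Icc (0:ℝ) 1, IsSymp (G t)) ∧ (∀ p ∈ disk, G 0 p = p)

/-- `f` is a family of Hamiltonian functions for the isotopy `G`, i.e.
`i_{X_t} ω = d f_t` where `X_t = (∂g_t/∂t) ∘ g_t⁻¹`; since `g_t` maps the disk
onto itself this is expressed at the points `G t p`, `p ∈ D`. -/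
def IsHam (G : ℝ → ℝ × ℝ → ℝ × ℝ) (f : ℝ → ℝ × ℝ → ℝ) : Prop :=
  ContDiff ℝ (⊤ : ℕ∞) (fun q : ℝ × (ℝ × ℝ) => f q.1 q.2) ∧
    ∀ t ∈ Icc (0:ℝ) 1, ∀ p ∈ disk,
      pdx (f t) (G t p) = -(deriv (fun s => G s p) t).2 ∧
      pdy (f t) (G t p) = (deriv (fun s => G s p) t).1

/-- `φ` is the lift of the boundary isotopy of `G`, with `φ 0 = id`. -/
def IsBoundaryLift (G : ℝ → ℝ × ℝ → ℝ × ℝ) (φ : ℝ → ℝ → ℝ) : Prop :=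
  ContDiff ℝ (⊤ : ℕ∞) (fun q : ℝ × ℝ => φ q.1 q.2) ∧
    (∀ t ∈ Icc (0:ℝ) 1, StrictMono (φ t) ∧ ∀ θ : ℝ, φ t (θ + 2 * π) = φ t θ + 2 * π) ∧
    (∀ θ : ℝ, φ 0 θ = θ) ∧
    (∀ t ∈ Icc (0:ℝ) 1, ∀ θ : ℝ,
      G t (Real.cos θ, Real.sin θ) = (Real.cos (φ t θ), Real.sin (φ t θ)))


theorem disk_closed : IsClosed disk := by
  unfold disk
  exact isClosed_le (by fun_prop) (by fun_prop)

theorem disk_compact : IsCompact disk := by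
  refine (isCompact_Icc (a := ((-1, -1) : ℝ × ℝ)) (b := (1, 1))).of_isClosed_subset disk_closed ?_
  intro p hp
  simp only [disk, mem_ofPred_eq] at hp
  refine ⟨⟨?_, ?_⟩, ⟨?_, ?_⟩⟩ <;> simp <;> nlinarith [sq_nonneg p.1, sq_nonneg p.2]

theorem swap_disk (F : ℝ × (ℝ × ℝ) → ℝ) (hF : Continuous F) (a b : ℝ) (hab : a ≤ b) :
    ∫ p in disk, ∫ t in a..b, F (t, p) = ∫ t in a..b, ∫ p in disk, F (t, p) := by
  simp only [intervalIntegral.integral_of_le hab]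
  rw [integral_integral_swap]
  rw [Measure.prod_restrict]
  change IntegrableOn _ _ _
  refine IntegrableOn.mono_set (t := disk ×ˢ Icc a b) ?_ (prod_mono_right Ioc_subset_Icc_self)
  refine ContinuousOn.integrableOn_compact (disk_compact.prod isCompact_Icc) ?_
  apply Continuous.continuousOn
  simp only [uncurry_def]
  fun_prop

theorem swap_int (F : ℝ × ℝ → ℝ) (hF : Continuous F) (a b c d : ℝ) (hab : a ≤ b) (hcd : c ≤ d) :
    ∫ t in a..b, ∫ s in c..d, F (t, s) = ∫ s in c..d, ∫ t in a..b, F (t, s) := by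
  simp only [intervalIntegral.integral_of_le hab, intervalIntegral.integral_of_le hcd]
  rw [integral_integral_swap]
  rw [Measure.prod_restrict]
  change IntegrableOn _ _ _
  refine IntegrableOn.mono_set (t := Icc a b ×ˢ Icc c d) ?_
    (prod_mono Ioc_subset_Icc_self Ioc_subset_Icc_self)
  refine ContinuousOn.integrableOn_compact (isCompact_Icc.prod isCompact_Icc) ?_
  apply Continuous.continuousOn
  simp only [uncurry_def]
  fun_prop

theorem polar_disk (w : ℝ × ℝ → ℝ) (hw : Continuous w) :
    ∫ p in disk, w p = ∫ θ in (-π)..π, ∫ r in (0:ℝ)..1, r * w (r * cos θ, r * sin θ) := by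
  rw [swap_int (fun q => q.2 * w (q.2 * cos q.1, q.2 * sin q.1)) (by fun_prop) _ _ _ _
    (by linarith [pi_pos]) (by norm_num)]
  rw [← integral_indicator disk_closed.measurableSet, ← integral_comp_polarCoord_symm]
  have h1 : ∫ p in polarCoord.target, p.1 • disk.indicator w (polarCoord.symm p)
      = ∫ p in polarCoord.target, (Iic 1 ×ˢ univ).indicator
        (fun q : ℝ × ℝ => q.1 * w (q.1 * cos q.2, q.1 * sin q.2)) p := by
    refine setIntegral_congr_fun polarCoord.open_target.measurableSet ?_
    intro p hp
    have hp0 : 0 < p.1 := by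
      simp [polarCoord_target] at hp
      exact hp.1
    have hd : polarCoord.symm p ∈ disk ↔ p ∈ (Iic (1:ℝ) ×ˢ (univ : Set ℝ)) := by
      simp only [disk, polarCoord_symm_apply, mem_ofPred_eq, mem_prod, mem_Iic, mem_univ, and_true]
      have : (p.1 * cos p.2) ^ 2 + (p.1 * sin p.2) ^ 2 = p.1 ^ 2 := by
        nlinarith [sin_sq_add_cos_sq p.2]
      rw [this]
      constructor <;> intro h <;> nlinarith
    by_cases h : polarCoord.symm p ∈ disk
    · simp only [indicator_of_mem h, indicator_of_mem (hd.1 h)]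
      simp only [smul_eq_mul, polarCoord_symm_apply]
    · simp only [indicator_of_notMem h, indicator_of_notMem (fun h' => h (hd.2 h')), smul_zero]
  rw [h1, setIntegral_indicator (measurableSet_Iic.prod MeasurableSet.univ), polarCoord_target,
    prod_inter_prod, Ioi_inter_Iic, inter_univ, Measure.volume_eq_prod, setIntegral_prod]
  · rw [intervalIntegral.integral_of_le (by norm_num)]
    refine setIntegral_congr_fun measurableSet_Ioc ?_
    intro r _
    simp only
    rw [intervalIntegral.integral_of_le (by linarith [pi_pos]), integral_Ioc_eq_integral_Ioo]
  · refine IntegrableOn.mono_set (t := Icc 0 1 ×ˢ Icc (-π) π) ?_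
      (prod_mono Ioc_subset_Icc_self Ioo_subset_Icc_self)
    refine ContinuousOn.integrableOn_compact (isCompact_Icc.prod isCompact_Icc) ?_
    apply Continuous.continuousOn
    fun_prop

theorem euler_disk (h : ℝ × ℝ → ℝ) (hh : ContDiff ℝ (⊤ : ℕ∞) h) :
    ∫ p in disk, fderiv ℝ h p p =
      (∫ θ in (-π)..π, h (cos θ, sin θ)) - 2 * ∫ p in disk, h p := by
  have hc : Continuous h := hh.continuous
  have hd : Continuous (fun p => fderiv ℝ h p p) := by
    have := hh.continuous_fderiv (by simp)
    fun_prop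
  rw [polar_disk _ hd, polar_disk _ hc, ← intervalIntegral.integral_const_mul,
    ← intervalIntegral.integral_sub]
  · refine intervalIntegral.integral_congr ?_
    intro θ _
    simp only
    have hder : ∀ r : ℝ, HasDerivAt (fun r : ℝ => h (r * cos θ, r * sin θ))
        (fderiv ℝ h (r * cos θ, r * sin θ) (cos θ, sin θ)) r := by
      intro r
      have h1 : HasDerivAt (fun r : ℝ => (r * cos θ, r * sin θ)) (cos θ, sin θ) r := by
        simpa using ((hasDerivAt_id r).mul_const (cos θ)).prodMk
          ((hasDerivAt_id r).mul_const (sin θ))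
      exact ((hh.differentiable (by simp)) _).hasFDerivAt.comp_hasDerivAt r h1
    have hcd : Continuous (fun r : ℝ => fderiv ℝ h (r * cos θ, r * sin θ) (cos θ, sin θ)) := by
      have := hh.continuous_fderiv (by simp)
      fun_prop
    have hp := intervalIntegral.integral_mul_deriv_eq_deriv_mul (a := 0) (b := 1)
      (u := fun r : ℝ => r ^ 2) (u' := fun r => 2 * r)
      (v := fun r : ℝ => h (r * cos θ, r * sin θ))
      (fun r _ => by simpa using hasDerivAt_pow 2 r) (fun r _ => hder r)
      ((by fun_prop : Continuous _).intervalIntegrable _ _) (hcd.intervalIntegrable _ _)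
    simp only [one_pow, one_mul, ne_eq, OfNat.ofNat_ne_zero, not_false_eq_true, zero_pow, zero_mul,
      sub_zero] at hp
    rw [← intervalIntegral.integral_const_mul]
    have e1 : ∀ r : ℝ, r * fderiv ℝ h (r * cos θ, r * sin θ) (r * cos θ, r * sin θ)
        = r ^ 2 * fderiv ℝ h (r * cos θ, r * sin θ) (cos θ, sin θ) := by
      intro r
      have : ((r * cos θ, r * sin θ) : ℝ × ℝ) = r • (cos θ, sin θ) := by simp
      conv_lhs => arg 2; arg 2; rw [this]
      rw [map_smul, smul_eq_mul]
      ring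
    simp only [e1]
    rw [hp]
    simp only [mul_assoc]
  · exact (by fun_prop : Continuous _).intervalIntegrable _ _
  · apply Continuous.intervalIntegrable
    refine continuous_const.mul ?_
    exact intervalIntegral.continuous_parametric_intervalIntegral_of_continuous' (by fun_prop) _ _

theorem cov_disk (g : ℝ × ℝ → ℝ × ℝ) (hg : IsSymp g) (K : ℝ × ℝ → ℝ) :
    ∫ p in disk, K (g p) = ∫ p in disk, K p := by
  obtain ⟨hs, hm, hj, g', hs', hm', hl, hr⟩ := hg
  have hinj : InjOn g disk := fun p hp q hq e => by rw [← hl p hp, ← hl q hq, e]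
  have him : g '' disk = disk := by
    apply Subset.antisymm hm.image_subset
    intro p hp
    exact ⟨g' p, hm' hp, hr p hp⟩
  have hdiff := hs.differentiable (by simp)
  have := integral_image_eq_integral_abs_det_fderiv_smul volume disk_closed.measurableSet
    (f' := fun p => fderiv ℝ g p) (fun p _ => (hdiff p).hasFDerivAt.hasFDerivWithinAt) hinj K
  rw [him] at this
  rw [this]
  refine setIntegral_congr_fun disk_closed.measurableSet ?_
  intro p hp
  have hdet : (fderiv ℝ g p).det = 1 := by
    rw [← hj p hp]
    have h1 : ∀ w, fderiv ℝ (fun q => (g q).1) p w = (fderiv ℝ g p w).1 := by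
      intro w
      rw [((hdiff p).hasFDerivAt.fst).fderiv]; rfl
    have h2 : ∀ w, fderiv ℝ (fun q => (g q).2) p w = (fderiv ℝ g p w).2 := by
      intro w
      rw [((hdiff p).hasFDerivAt.snd).fderiv]; rfl
    rw [ContinuousLinearMap.det, ← LinearMap.det_toMatrix (Module.Basis.finTwoProd ℝ),
      Matrix.det_fin_two]
    simp [LinearMap.toMatrix_apply, jacDet, pdx, pdy, h1, h2]
  simp only [hdet, abs_one, one_smul]

theorem disk_uniqueDiff : UniqueDiffOn ℝ disk := by
  apply uniqueDiffOn_convex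
  · intro p hp q hq a b ha hb hab
    simp only [disk, mem_ofPred_eq, Prod.fst_add, Prod.snd_add, Prod.smul_fst, Prod.smul_snd,
      smul_eq_mul] at *
    have hb' : b = 1 - a := by linarith
    subst hb'
    nlinarith [mul_nonneg (mul_nonneg ha hb) (sq_nonneg (p.1 - q.1)),
      mul_nonneg (mul_nonneg ha hb) (sq_nonneg (p.2 - q.2))]
  · refine ⟨(0, 0), ?_⟩
    have ho : IsOpen {p : ℝ × ℝ | p.1 ^ 2 + p.2 ^ 2 < 1} :=
      isOpen_lt (by fun_prop) (by fun_prop)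
    have hs : {p : ℝ × ℝ | p.1 ^ 2 + p.2 ^ 2 < 1} ⊆ disk := by
      intro p hp
      simp only [disk, mem_ofPred_eq] at *
      exact hp.le
    exact interior_maximal hs ho (by simp)

/-- Angular density of a family of maps along the radial field. -/
def angI (U : ℝ × (ℝ × ℝ) → ℝ × ℝ) (z : ℝ × (ℝ × ℝ)) : ℝ :=
  (U z).1 * (fderiv ℝ U z (0, z.2)).2 - (U z).2 * (fderiv ℝ U z (0, z.2)).1

/-- The primitive whose radial derivative is the time derivative of `angI`. -/
def angH (F : ℝ × (ℝ × ℝ) → ℝ) (U : ℝ × (ℝ × ℝ) → ℝ × ℝ) (z : ℝ × (ℝ × ℝ)) : ℝ :=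
  2 * F (z.1, U z) + ((U z).1 * (fderiv ℝ U z (1, 0)).2 - (U z).2 * (fderiv ℝ U z (1, 0)).1)

theorem slice_fderiv {E : Type*} [NormedAddCommGroup E] [NormedSpace ℝ E]
    (W : ℝ × (ℝ × ℝ) → E) (t : ℝ) (p w : ℝ × ℝ) (hW : DifferentiableAt ℝ W (t, p)) :
    fderiv ℝ (fun q => W (t, q)) p w = fderiv ℝ W (t, p) (0, w) := by
  have h1 : HasFDerivAt (fun q : ℝ × ℝ => (t, q)) (ContinuousLinearMap.inr ℝ ℝ (ℝ × ℝ)) p :=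
    hasFDerivAt_prodMk_right t p
  have h2 : HasFDerivAt (fun q => W (t, q)) _ p :=
    HasFDerivAt.comp p (g := W) (f := fun q : ℝ × ℝ => (t, q)) hW.hasFDerivAt h1
  rw [h2.fderiv]
  simp

theorem hda_fst {c : ℝ → ℝ × ℝ} {c' : ℝ × ℝ} {t : ℝ} (h : HasDerivAt c c' t) :
    HasDerivAt (fun s => (c s).1) c'.1 t :=
  (ContinuousLinearMap.fst ℝ ℝ ℝ).hasFDerivAt.comp_hasDerivAt t h

theorem hda_snd {c : ℝ → ℝ × ℝ} {c' : ℝ × ℝ} {t : ℝ} (h : HasDerivAt c c' t) :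
    HasDerivAt (fun s => (c s).2) c'.2 t :=
  (ContinuousLinearMap.snd ℝ ℝ ℝ).hasFDerivAt.comp_hasDerivAt t h

theorem angH_smooth (F : ℝ × (ℝ × ℝ) → ℝ) (U : ℝ × (ℝ × ℝ) → ℝ × ℝ)
    (hF : ContDiff ℝ (⊤ : ℕ∞) F) (hU : ContDiff ℝ (⊤ : ℕ∞) U) :
    ContDiff ℝ (⊤ : ℕ∞) (angH F U) := by
  have hD : ContDiff ℝ (⊤ : ℕ∞) (fderiv ℝ U) := hU.fderiv_right (by simp)
  unfold angH
  have : ContDiff ℝ (⊤ : ℕ∞) (fun z => fderiv ℝ U z (1, 0)) := hD.clm_apply contDiff_const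
  fun_prop

theorem time_hasDerivAt {E : Type*} [NormedAddCommGroup E] [NormedSpace ℝ E] {A : Type*}
    [NormedAddCommGroup A] [NormedSpace ℝ A]
    (W : ℝ × A → E) (hW : Differentiable ℝ W) (t : ℝ) (p : A) :
    HasDerivAt (fun s => W (s, p)) (fderiv ℝ W (t, p) (1, 0)) t := by
  have h1 : HasDerivAt (fun s : ℝ => (s, p)) ((1, 0) : ℝ × A) t :=
    (hasDerivAt_id t).prodMk (hasDerivAt_const t p)
  exact (hW (t, p)).hasFDerivAt.comp_hasDerivAt t h1

theorem rad_hasDerivAt {E : Type*} [NormedAddCommGroup E] [NormedSpace ℝ E]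
    (W : ℝ × (ℝ × ℝ) → E) (hW : Differentiable ℝ W) (t : ℝ) (p : ℝ × ℝ) :
    HasDerivAt (fun s : ℝ => W (t, s • p)) (fderiv ℝ W (t, p) (0, p)) 1 := by
  have h1 : HasDerivAt (fun s : ℝ => (t, s • p)) ((0, p) : ℝ × (ℝ × ℝ)) 1 := by
    have := (hasDerivAt_id (1:ℝ)).smul_const p
    simp only [id, one_smul] at this
    exact (hasDerivAt_const _ t).prodMk this
  have h2 : HasFDerivAt W (fderiv ℝ W (t, p)) (t, (1:ℝ) • p) := by
    rw [one_smul]; exact (hW (t, p)).hasFDerivAt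
  exact h2.comp_hasDerivAt (1:ℝ) h1

theorem angI_hasDerivAt (F : ℝ × (ℝ × ℝ) → ℝ) (U : ℝ × (ℝ × ℝ) → ℝ × ℝ)
    (hF : ContDiff ℝ (⊤ : ℕ∞) F) (hU : ContDiff ℝ (⊤ : ℕ∞) U) (t : ℝ) (p : ℝ × ℝ)
    (h1 : fderiv ℝ F (t, U (t, p)) (0, (1, 0)) = -(fderiv ℝ U (t, p) (1, 0)).2)
    (h2 : fderiv ℝ F (t, U (t, p)) (0, (0, 1)) = (fderiv ℝ U (t, p) (1, 0)).1) :
    HasDerivAt (fun s => angI U (s, p)) (fderiv ℝ (angH F U) (t, p) (0, p)) t := by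
  have hD : ContDiff ℝ (⊤ : ℕ∞) (fderiv ℝ U) := hU.fderiv_right (by simp)
  have dU := hU.differentiable (by simp)
  have dD := hD.differentiable (by simp)
  have dF := hF.differentiable (by simp)
  have symm : fderiv ℝ (fderiv ℝ U) (t, p) (1, 0) (0, p)
      = fderiv ℝ (fderiv ℝ U) (t, p) (0, p) (1, 0) :=
    (hU.contDiffAt.isSymmSndFDerivAt (by
      rw [minSmoothness_of_isRCLikeNormedField]; exact WithTop.coe_le_coe.2 (le_top : (2 : ℕ∞) ≤ ⊤))) _ _
  -- time side
  have tU := time_hasDerivAt U dU t p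
  have tD := (time_hasDerivAt (fderiv ℝ U) dD t p).clm_apply
    (hasDerivAt_const t ((0, p) : ℝ × (ℝ × ℝ)))
  have tI := ((hda_fst tU).mul (hda_snd tD)).sub ((hda_snd tU).mul (hda_fst tD))
  -- radial side
  have rU := rad_hasDerivAt U dU t p
  have rD := (rad_hasDerivAt (fderiv ℝ U) dD t p).clm_apply
    (hasDerivAt_const 1 ((1, 0) : ℝ × (ℝ × ℝ)))
  have rF : HasDerivAt (fun s : ℝ => F (t, U (t, s • p)))
      (fderiv ℝ F (t, U (t, p)) (0, fderiv ℝ U (t, p) (0, p))) 1 := by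
    have h2 : HasFDerivAt F (fderiv ℝ F (t, U (t, p))) (t, U (t, (1:ℝ) • p)) := by
      rw [one_smul]; exact (dF _).hasFDerivAt
    exact h2.comp_hasDerivAt (1:ℝ) ((hasDerivAt_const _ t).prodMk rU)
  have rH := (rF.const_mul 2).add (((hda_fst rU).mul (hda_snd rD)).sub ((hda_snd rU).mul (hda_fst rD)))
  have rH' := rad_hasDerivAt (angH F U) ((angH_smooth F U hF hU).differentiable (by simp)) t p
  have key := rH'.unique rH
  have hlin : fderiv ℝ F (t, U (t, p)) (0, fderiv ℝ U (t, p) (0, p))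
      = (fderiv ℝ U (t, p) (0, p)).1 * fderiv ℝ F (t, U (t, p)) (0, (1, 0))
        + (fderiv ℝ U (t, p) (0, p)).2 * fderiv ℝ F (t, U (t, p)) (0, (0, 1)) := by
    have : ((0, fderiv ℝ U (t, p) (0, p)) : ℝ × (ℝ × ℝ))
      = (fderiv ℝ U (t, p) (0, p)).1 • ((0, (1, 0)) : ℝ × (ℝ × ℝ))
        + (fderiv ℝ U (t, p) (0, p)).2 • ((0, (0, 1)) : ℝ × (ℝ × ℝ)) := by
      ext <;> simp
    conv_lhs => rw [this]
    simp only [map_add, map_smul, smul_eq_mul]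
  rw [key]
  refine tI.congr_deriv ?_
  simp only [one_smul, map_zero, add_zero, hlin, h1, h2, symm]
  ring

theorem tau_slice (U : ℝ × (ℝ × ℝ) → ℝ × ℝ) (hU : ContDiff ℝ (⊤ : ℕ∞) U) (t : ℝ) :
    4 * tauL (fun q => U (t, q)) = ∫ p in disk, angI U (t, p) := by
  have dU := hU.differentiable (by simp)
  unfold tauL
  rw [← mul_assoc]
  norm_num
  refine setIntegral_congr_fun disk_closed.measurableSet ?_
  intro p _
  have h1 : ∀ w, fderiv ℝ (fun q => (U (t, q)).1) p w = (fderiv ℝ U (t, p) (0, w)).1 := by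
    intro w
    rw [slice_fderiv (fun z => (U z).1) t p w (dU _).fst, ((dU (t, p)).hasFDerivAt.fst).fderiv]
    rfl
  have h2 : ∀ w, fderiv ℝ (fun q => (U (t, q)).2) p w = (fderiv ℝ U (t, p) (0, w)).2 := by
    intro w
    rw [slice_fderiv (fun z => (U z).2) t p w (dU _).snd, ((dU (t, p)).hasFDerivAt.snd).fderiv]
    rfl
  have hp : ((0, p) : ℝ × (ℝ × ℝ)) = p.1 • (0, (1, 0)) + p.2 • (0, (0, 1)) := by
    ext <;> simp
  simp only [pdx, pdy, h1, h2, angI]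
  rw [hp]
  simp only [map_add, map_smul, Prod.fst_add, Prod.snd_add, Prod.smul_fst, Prod.smul_snd,
    smul_eq_mul]
  ring

theorem tau_congr (g k : ℝ × ℝ → ℝ × ℝ) (hg : Differentiable ℝ g) (hk : Differentiable ℝ k)
    (h : ∀ p ∈ disk, g p = k p) : tauL g = tauL k := by
  unfold tauL
  congr 1
  refine setIntegral_congr_fun disk_closed.measurableSet ?_
  intro p hp
  have e1 : fderiv ℝ (fun q => (g q).1) p = fderiv ℝ (fun q => (k q).1) p := by
    rw [← (hg p).fst.fderivWithin (disk_uniqueDiff p hp),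
      ← (hk p).fst.fderivWithin (disk_uniqueDiff p hp)]
    exact fderivWithin_congr (fun q hq => by rw [h q hq]) (by rw [h p hp])
  have e2 : fderiv ℝ (fun q => (g q).2) p = fderiv ℝ (fun q => (k q).2) p := by
    rw [← (hg p).snd.fderivWithin (disk_uniqueDiff p hp),
      ← (hk p).snd.fderivWithin (disk_uniqueDiff p hp)]
    exact fderivWithin_congr (fun q hq => by rw [h q hq]) (by rw [h p hp])
  simp only [pdx, pdy, e1, e2, h p hp]

theorem tau_id : tauL id = 0 := by
  unfold tauL
  have h1 : ∀ p : ℝ × ℝ, fderiv ℝ (fun q : ℝ × ℝ => q.1) p = ContinuousLinearMap.fst ℝ ℝ ℝ :=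
    fun p => hasFDerivAt_fst.fderiv
  have h2 : ∀ p : ℝ × ℝ, fderiv ℝ (fun q : ℝ × ℝ => q.2) p = ContinuousLinearMap.snd ℝ ℝ ℝ :=
    fun p => hasFDerivAt_snd.fderiv
  have : ∀ p : ℝ × ℝ, -(p.1 * p.2) + p.2 * p.1 = 0 := fun p => by ring
  simp [pdx, pdy, h1, h2, this]

theorem step (G : ℝ → ℝ × ℝ → ℝ × ℝ) (f : ℝ → ℝ × ℝ → ℝ) (φ : ℝ → ℝ → ℝ)
    (hG : IsIsotopy G) (hf : IsHam G f)
    (hf0 : ∀ t ∈ Icc (0:ℝ) 1, ∀ p ∈ bdry, f t p = 0)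
    (hφ : IsBoundaryLift G φ) (k : ℝ × ℝ → ℝ × ℝ) (hk : ContDiff ℝ (⊤ : ℕ∞) k)
    (hkm : MapsTo k disk disk) (hki : ∀ K : ℝ × ℝ → ℝ, ∫ p in disk, K (k p) = ∫ p in disk, K p)
    (ψ : ℝ → ℝ) (hψ : Continuous ψ)
    (hkψ : ∀ θ, k (cos θ, sin θ) = (cos (ψ θ), sin (ψ θ))) :
    4 * tauL (G 1 ∘ k) - 4 * tauL k
      = (∫ θ in (-π)..π, (φ 1 (ψ θ) - ψ θ)) - 8 * ∫ t in (0:ℝ)..1, ∫ p in disk, f t p := by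
  obtain ⟨sG, symG, G0⟩ := hG
  obtain ⟨sf, hham⟩ := hf
  obtain ⟨sφ, -, φ0, φG⟩ := hφ
  set U : ℝ × (ℝ × ℝ) → ℝ × ℝ := fun z => G z.1 (k z.2) with hUdef
  set F : ℝ × (ℝ × ℝ) → ℝ := fun z => f z.1 z.2 with hFdef
  set Φ : ℝ × ℝ → ℝ := fun z => φ z.1 z.2 with hΦdef
  have sU : ContDiff ℝ (⊤ : ℕ∞) U :=
    sG.comp (contDiff_fst.prodMk (hk.comp contDiff_snd))
  have dU := sU.differentiable (by simp)
  have dF := sf.differentiable (by simp)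
  have dΦ := sφ.differentiable (by simp)
  have sH := angH_smooth F U sf sU
  have dH := sH.differentiable (by simp)
  have cDU : Continuous (fderiv ℝ U) := sU.continuous_fderiv (by simp)
  have cDH : Continuous (fderiv ℝ (angH F U)) := sH.continuous_fderiv (by simp)
  have cDΦ : Continuous (fderiv ℝ Φ) := sφ.continuous_fderiv (by simp)
  have cU := sU.continuous
  have cI : Continuous (angI U) := by unfold angI; fun_prop
  have ham : ∀ t ∈ Icc (0:ℝ) 1, ∀ p ∈ disk,
      fderiv ℝ F (t, U (t, p)) (0, (1, 0)) = -(fderiv ℝ U (t, p) (1, 0)).2 ∧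
      fderiv ℝ F (t, U (t, p)) (0, (0, 1)) = (fderiv ℝ U (t, p) (1, 0)).1 := by
    intro t ht p hp
    have h := hham t ht (k p) (hkm hp)
    have e : deriv (fun s => G s (k p)) t = fderiv ℝ U (t, p) (1, 0) :=
      (time_hasDerivAt U dU t p).deriv
    rw [e] at h
    have hs := fun w => slice_fderiv F t (U (t, p)) w (dF _)
    rw [← hs, ← hs]
    exact h
  -- time integration
  have e1 : 4 * tauL (G 1 ∘ k) = ∫ p in disk, angI U (1, p) := tau_slice U sU 1
  have e0 : 4 * tauL k = ∫ p in disk, angI U (0, p) := by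
    rw [← tau_slice U sU 0]
    congr 1
    refine tau_congr _ _ (hk.differentiable (by simp)) ?_ ?_
    · exact dU.comp (by fun_prop : Differentiable ℝ (fun q : ℝ × ℝ => ((0:ℝ), q)))
    · intro p hp
      exact (G0 _ (hkm hp)).symm
  have eD : ∫ p in disk, angI U (1, p) - angI U (0, p)
      = ∫ p in disk, ∫ t in (0:ℝ)..1, fderiv ℝ (angH F U) (t, p) (0, p) := by
    refine setIntegral_congr_fun disk_closed.measurableSet ?_
    intro p hp
    simp only
    rw [intervalIntegral.integral_eq_sub_of_hasDerivAt (f := fun s => angI U (s, p))]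
    · intro t ht
      rw [uIcc_of_le zero_le_one] at ht
      exact angI_hasDerivAt F U sf sU t p (ham t ht p hp).1 (ham t ht p hp).2
    · exact (by fun_prop : Continuous _).intervalIntegrable _ _
  have int : ∀ t, IntegrableOn (fun p => angI U (t, p)) disk := fun t =>
    (by fun_prop : Continuous (fun p => angI U (t, p))).continuousOn.integrableOn_compact
      disk_compact
  rw [e1, e0, ← integral_sub (int 1) (int 0), eD,
    swap_disk (fun z => fderiv ℝ (angH F U) z (0, z.2)) (by fun_prop) 0 1 zero_le_one]
  -- fixed time
  have fixed : ∀ t ∈ Icc (0:ℝ) 1, ∫ p in disk, fderiv ℝ (angH F U) (t, p) (0, p)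
      = (∫ θ in (-π)..π, fderiv ℝ Φ (t, ψ θ) (1, 0)) - 8 * ∫ p in disk, f t p := by
    intro t ht
    have sft : ContDiff ℝ (⊤ : ℕ∞) (f t) := sf.comp (contDiff_prodMk_right t)
    have sHt : ContDiff ℝ (⊤ : ℕ∞) (fun q => angH F U (t, q)) := sH.comp (contDiff_prodMk_right t)
    have a1 := euler_disk _ sHt
    simp only [slice_fderiv (angH F U) t _ _ (dH _)] at a1
    have a2 : ∫ p in disk, angH F U (t, p) = 4 * ∫ p in disk, f t p := by
      have b1 : ∫ p in disk, angH F U (t, p)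
          = ∫ p in disk, (fun q => 2 * f t q - fderiv ℝ (f t) q q) (G t (k p)) := by
        refine setIntegral_congr_fun disk_closed.measurableSet ?_
        intro p hp
        obtain ⟨c1, c2⟩ := ham t ht p hp
        have hlin : fderiv ℝ (f t) (U (t, p)) (U (t, p))
            = (U (t, p)).1 * fderiv ℝ F (t, U (t, p)) (0, (1, 0))
              + (U (t, p)).2 * fderiv ℝ F (t, U (t, p)) (0, (0, 1)) := by
          have hs : fderiv ℝ (f t) (U (t, p)) (U (t, p))
              = fderiv ℝ F (t, U (t, p)) (0, U (t, p)) :=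
            slice_fderiv F t (U (t, p)) (U (t, p)) (dF _)
          have : ((0, U (t, p)) : ℝ × (ℝ × ℝ))
            = (U (t, p)).1 • ((0, (1, 0)) : ℝ × (ℝ × ℝ))
              + (U (t, p)).2 • ((0, (0, 1)) : ℝ × (ℝ × ℝ)) := by
            ext <;> simp
          rw [hs, this]
          simp only [map_add, map_smul, smul_eq_mul]
        change angH F U (t, p) = 2 * F (t, U (t, p)) - fderiv ℝ (f t) (U (t, p)) (U (t, p))
        rw [hlin, c1, c2]
        unfold angH
        ring
      have cft := sft.continuous
      have cdft := sft.continuous_fderiv (by simp)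
      rw [b1, hki (fun p => (fun q => 2 * f t q - fderiv ℝ (f t) q q) (G t p)),
        cov_disk (G t) (symG t ht) (fun q => 2 * f t q - fderiv ℝ (f t) q q),
        integral_sub, integral_const_mul, euler_disk _ sft]
      · have : ∀ θ : ℝ, f t (cos θ, sin θ) = 0 := fun θ => hf0 t ht _ (by
          simp [bdry])
        simp only [this, intervalIntegral.integral_zero]
        ring
      · exact (by fun_prop : Continuous _).continuousOn.integrableOn_compact disk_compact
      · exact (by fun_prop : Continuous _).continuousOn.integrableOn_compact disk_compact
    have a3 : ∀ θ : ℝ, angH F U (t, (cos θ, sin θ)) = fderiv ℝ Φ (t, ψ θ) (1, 0) := by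
      intro θ
      have hUe : ∀ s ∈ Icc (0:ℝ) 1, U (s, (cos θ, sin θ))
          = (cos (φ s (ψ θ)), sin (φ s (ψ θ))) := by
        intro s hs
        simp only [hUdef, hkψ]
        exact φG s hs _
      have d1 := time_hasDerivAt U dU t (cos θ, sin θ)
      have d2 : HasDerivAt (fun s => φ s (ψ θ)) (fderiv ℝ Φ (t, ψ θ) (1, 0)) t :=
        time_hasDerivAt Φ dΦ t (ψ θ)
      have d3 := d2.cos.prodMk d2.sin
      have d4 := d3.hasDerivWithinAt (s := Icc (0:ℝ) 1)
      have d5 := d4.congr (f₁ := fun s => U (s, (cos θ, sin θ))) hUe (hUe t ht)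
      have hd := (uniqueDiffOn_Icc (zero_lt_one (α := ℝ)) t ht).eq_deriv _
        d1.hasDerivWithinAt d5
      have hz : F (t, U (t, (cos θ, sin θ))) = 0 := by
        rw [hUe t ht]
        exact hf0 t ht _ (by simp [bdry])
      unfold angH
      simp only [hz]
      simp only [hd, hUe t ht]
      linear_combination fderiv ℝ Φ (t, ψ θ) (1, 0) * sin_sq_add_cos_sq (φ t (ψ θ))
    rw [a1, a2]
    simp only [a3]
    ring
  rw [intervalIntegral.integral_congr (g := fun t =>
    (∫ θ in (-π)..π, fderiv ℝ Φ (t, ψ θ) (1, 0)) - 8 * ∫ p in disk, f t p)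
    (fun t ht => fixed t (by rwa [uIcc_of_le zero_le_one] at ht))]
  have cf := sf.continuous
  have icf : Continuous (fun t => ∫ p in disk, f t p) :=
    continuous_parametric_integral_of_continuous (by exact cf) disk_compact
  rw [intervalIntegral.integral_sub, intervalIntegral.integral_const_mul]
  · congr 1
    rw [swap_int (fun z => fderiv ℝ Φ (z.1, ψ z.2) (1, 0)) (by fun_prop) _ _ _ _ zero_le_one
      (by linarith [pi_pos])]
    refine intervalIntegral.integral_congr ?_
    intro θ _
    simp only
    rw [intervalIntegral.integral_eq_sub_of_hasDerivAt (f := fun s => Φ (s, ψ θ))]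
    · simp only [hΦdef, φ0]
    · intro t _
      exact time_hasDerivAt Φ dΦ t (ψ θ)
    · exact (by fun_prop : Continuous _).intervalIntegrable _ _
  · apply Continuous.intervalIntegrable
    exact intervalIntegral.continuous_parametric_intervalIntegral_of_continuous' (by fun_prop) _ _
  · exact (by fun_prop : Continuous _).intervalIntegrable _ _

theorem circle_limits (g : ℝ → ℝ) (hc : Continuous g) (hm : StrictMono g)
    (hp : ∀ θ, g (θ + 2 * π) = g θ + 2 * π) :
    ∃ r : ℝ, Tendsto (fun n : ℕ => g^[n] 0 / (2 * π * n)) atTop (𝓝 r) ∧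
      Tendsto (fun n : ℕ => (∫ θ in (-π)..π, (g^[n] θ - θ)) / n) atTop (𝓝 (4 * π ^ 2 * r)) := by
  have pp := pi_pos
  let L : CircleDeg1Lift :=
    { toFun := fun x => g (2 * π * x) / (2 * π)
      monotone' := fun x y h => by
        have : 2 * π * x ≤ 2 * π * y := by gcongr
        have := hm.monotone this
        simp only
        gcongr
      map_add_one' := fun x => by
        rw [mul_add, mul_one, hp]
        field_simp }
  have hLa : ∀ x, L x = g (2 * π * x) / (2 * π) := fun x => rfl
  have hL : ∀ n : ℕ, ∀ x, (L ^ n) x = g^[n] (2 * π * x) / (2 * π) := by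
    intro n
    induction n with
    | zero => intro x; simp
    | succ n ih =>
      intro x
      rw [pow_succ', CircleDeg1Lift.mul_apply, ih, hLa, iterate_succ_apply']
      congr 2
      field_simp
  have h0 : ∀ n : ℕ, g^[n] 0 = 2 * π * (L ^ n) 0 := by
    intro n
    rw [hL, mul_zero]
    field_simp
  have t0 := L.tendsto_translation_number₀
  have lim0 : Tendsto (fun n : ℕ => g^[n] 0 / (2 * π * n)) atTop (𝓝 L.translationNumber) := by
    refine t0.congr fun n => ?_
    rw [h0, mul_div_mul_left _ _ (by positivity)]
  refine ⟨_, lim0, ?_⟩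
  have bd : ∀ n : ℕ, ∀ θ : ℝ, |g^[n] θ - θ - g^[n] 0| ≤ 2 * π := by
    intro n θ
    have e : g^[n] θ = 2 * π * (L ^ n) (θ / (2 * π)) := by
      rw [hL]
      field_simp
    have u1 := (L ^ n).map_le_of_map_zero (θ / (2 * π))
    have u2 := (L ^ n).le_map_of_map_zero (θ / (2 * π))
    have u3 := Int.ceil_lt_add_one (θ / (2 * π))
    have u4 := Int.sub_one_lt_floor (θ / (2 * π))
    have e2 : θ = 2 * π * (θ / (2 * π)) := by field_simp
    rw [e, h0, abs_le]
    set x := θ / (2 * π)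
    rw [e2]
    constructor <;> nlinarith
  have cg : ∀ n : ℕ, Continuous g^[n] := fun n => hc.iterate n
  have bd2 : ∀ n : ℕ, |(∫ θ in (-π)..π, (g^[n] θ - θ)) - 2 * π * g^[n] 0| ≤ 4 * π ^ 2 := by
    intro n
    have e : (∫ θ in (-π)..π, (g^[n] θ - θ)) - 2 * π * g^[n] 0
        = ∫ θ in (-π)..π, (g^[n] θ - θ - g^[n] 0) := by
      have := cg n
      rw [intervalIntegral.integral_sub (f := fun θ => g^[n] θ - θ)
        ((by fun_prop : Continuous _).intervalIntegrable _ _)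
        ((by fun_prop : Continuous _).intervalIntegrable _ _)]
      rw [intervalIntegral.integral_const, smul_eq_mul]
      ring
    rw [e, ← Real.norm_eq_abs]
    refine (intervalIntegral.norm_integral_le_of_norm_le_const (C := 2 * π)
      (fun θ _ => bd n θ)).trans (le_of_eq ?_)
    rw [abs_of_pos (by linarith)]
    ring
  have l1 : Tendsto (fun n : ℕ => 4 * π ^ 2 * (g^[n] 0 / (2 * π * n))) atTop
    (𝓝 (4 * π ^ 2 * L.translationNumber)) := lim0.const_mul _
  have l2 : Tendsto (fun n : ℕ => ((∫ θ in (-π)..π, (g^[n] θ - θ)) - 2 * π * g^[n] 0) / (n:ℝ)) atTop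
      (𝓝 0) := by
    refine squeeze_zero_norm (fun n => ?_) (tendsto_const_div_atTop_nhds_zero_nat (4 * π ^ 2))
    rw [norm_div, Real.norm_eq_abs, Real.norm_natCast]
    gcongr
    exact bd2 n
  have l3 := l1.add l2
  rw [add_zero] at l3
  refine l3.congr fun n => ?_
  rcases Nat.eq_zero_or_pos n with rfl | hn
  · simp
  · have : (n : ℝ) ≠ 0 := by positivity
    field_simp
    ring

/-- for a smooth isotopy `(g_t)` in `Symp(D)` with `g_0 = id`,
normalized Hamiltonians `f_t` vanishing on `∂D`,
`R((g_t)) = ∫₀¹ ∫_D f_t dxdy dt`, and the lift `φ̃` of the boundary isotopy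
with `φ̃_0 = id`, the limit `τ̄(g₁) = lim_n τ_λ(g₁ⁿ)/n` exists and
`τ̄(g₁) + 2 R((g_t)) = π² rot̃(φ̃₁)`, where
`rot̃(φ̃₁) = lim_n φ̃₁ⁿ(0)/(2πn)` is the translation number. -/
theorem tau_homogenized_add_two_R_eq_translation_number
    (G : ℝ → ℝ × ℝ → ℝ × ℝ) (f : ℝ → ℝ × ℝ → ℝ) (φ : ℝ → ℝ → ℝ)
    (hG : IsIsotopy G) (hf : IsHam G f)
    (hf0 : ∀ t ∈ Icc (0:ℝ) 1, ∀ p ∈ bdry, f t p = 0)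
    (hφ : IsBoundaryLift G φ) :
    ∃ T r : ℝ,
      Tendsto (fun n : ℕ => tauL (G 1)^[n] / (n : ℝ)) atTop (𝓝 T) ∧
      Tendsto (fun n : ℕ => (φ 1)^[n] 0 / (2 * π * n)) atTop (𝓝 r) ∧
      T + 2 * (∫ t in (0:ℝ)..1, ∫ p in disk, f t p) = π ^ 2 * r := by
  have h1 : (1:ℝ) ∈ Icc (0:ℝ) 1 := ⟨zero_le_one, le_rfl⟩
  have sφ1 : Continuous (φ 1) := by
    have := hφ.1.continuous
    exact this.comp (by fun_prop : Continuous (fun q : ℝ => ((1:ℝ), q)))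
  obtain ⟨r, hr, hI⟩ := circle_limits (φ 1) sφ1 (hφ.2.1 1 h1).1 (hφ.2.1 1 h1).2
  have hS := hG.2.1 1 h1
  set R := ∫ t in (0:ℝ)..1, ∫ p in disk, f t p with hR
  have smooth : ∀ n : ℕ, ContDiff ℝ (⊤ : ℕ∞) (G 1)^[n] := by
    intro n
    induction n with
    | zero => exact contDiff_id
    | succ n ih => rw [iterate_succ']; exact hS.1.comp ih
  have inv : ∀ n : ℕ, ∀ K : ℝ × ℝ → ℝ,
      ∫ p in disk, K ((G 1)^[n] p) = ∫ p in disk, K p := by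
    intro n
    induction n with
    | zero => intro K; rfl
    | succ n ih =>
      intro K
      simp only [iterate_succ_apply']
      rw [ih (fun p => K (G 1 p)), cov_disk _ hS]
  have bd : ∀ n : ℕ, ∀ θ, (G 1)^[n] (cos θ, sin θ) = (cos ((φ 1)^[n] θ), sin ((φ 1)^[n] θ)) := by
    intro n
    induction n with
    | zero => intro θ; rfl
    | succ n ih =>
      intro θ
      rw [iterate_succ_apply', iterate_succ_apply', ih, hφ.2.2.2 1 h1]
  have formula : ∀ n : ℕ, 4 * tauL (G 1)^[n]
      = (∫ θ in (-π)..π, ((φ 1)^[n] θ - θ)) - 8 * (n * R) := by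
    intro n
    induction n with
    | zero => simp [tau_id]
    | succ n ih =>
      have cn := sφ1.iterate n
      have hs := step G f φ hG hf hf0 hφ (G 1)^[n] (smooth n) (hS.2.1.iterate n) (inv n)
        (φ 1)^[n] cn (bd n)
      rw [← iterate_succ', ih] at hs
      have e : ∫ θ in (-π)..π, ((φ 1)^[n + 1] θ - θ)
          = (∫ θ in (-π)..π, (φ 1 ((φ 1)^[n] θ) - (φ 1)^[n] θ))
            + ∫ θ in (-π)..π, ((φ 1)^[n] θ - θ) := by
        rw [← intervalIntegral.integral_add
          ((by fun_prop : Continuous _).intervalIntegrable _ _)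
          ((by fun_prop : Continuous _).intervalIntegrable _ _)]
        refine intervalIntegral.integral_congr fun θ _ => ?_
        simp only [iterate_succ_apply']
        ring
      rw [e]
      push_cast
      linarith
  refine ⟨π ^ 2 * r - 2 * R, r, ?_, hr, by ring⟩
  have l := (hI.div_const 4).sub_const (2 * R)
  have e : 4 * π ^ 2 * r / 4 - 2 * R = π ^ 2 * r - 2 * R := by ring
  rw [e] at l
  refine l.congr' ?_
  filter_upwards [eventually_gt_atTop 0] with n hn
  have hn' : (n : ℝ) ≠ 0 := by positivity
  have := formula n
  have e2 : tauL (G 1)^[n] = ((∫ θ in (-π)..π, ((φ 1)^[n] θ - θ)) - 8 * (n * R)) / 4 := by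
    linarith
  rw [e2]
  field_simp
  ring
end
end

section
/- Let γ : [0,1] → D be a C^∞ path with γ(0) = (0,0) and γ(1) ∈ ∂D, and for g ∈ G_o define σ_γ(g) = ∫₀¹ (g*λ − λ)_{γ(t)}(γ'(t)) dt. Then for every g ∈ G_o the limit lim_{n→∞} σ_γ(gⁿ)/n exists and is independent of the choice of γ; in particular it equals lim_{n→∞} σ(gⁿ)/n computed with the radial path γ₀(t) = (t,0). That is, the homogenization σ̄ is independent of the choice of path from the origin to the boundary. -/
open MeasureTheory Filter Topology Set Function Real

noncomputable section

/-- `σ_γ(g) = ∫_γ (g*λ - λ)`: the line integral of `g*λ - λ` along a path `γ`. -/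
def sigmaPath (γ : ℝ → ℝ × ℝ) (g : ℝ × ℝ → ℝ × ℝ) : ℝ :=
  ∫ t in (0:ℝ)..1,
    ((1 / 2) * ((g (γ t)).1 * fderiv ℝ (fun q => (g q).2) (γ t) (deriv γ t) -
        (g (γ t)).2 * fderiv ℝ (fun q => (g q).1) (γ t) (deriv γ t)) -
     (1 / 2) * ((γ t).1 * (deriv γ t).2 - (γ t).2 * (deriv γ t).1))

def wdg (c : ℝ → ℝ × ℝ) (t : ℝ) : ℝ :=
  (1 / 2) * ((c t).1 * (deriv c t).2 - (c t).2 * (deriv c t).1)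

lemma disk_convex : Convex ℝ disk := by
  have h : ConvexOn ℝ univ (fun p : ℝ × ℝ => p.1 ^ 2 + p.2 ^ 2) := by
    refine ⟨convex_univ, ?_⟩
    intro x _ y _ a b ha hb hab
    have hb' : b = 1 - a := by linarith
    subst hb'
    simp only [Prod.fst_add, Prod.snd_add, Prod.smul_fst, Prod.smul_snd, smul_eq_mul]
    nlinarith [mul_nonneg (mul_nonneg ha hb) (sq_nonneg (x.1 - y.1)),
      mul_nonneg (mul_nonneg ha hb) (sq_nonneg (x.2 - y.2))]
  have := h.convex_le 1
  simpa [disk] using this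

lemma fderiv_pd (f : ℝ × ℝ → ℝ) (p x : ℝ × ℝ) :
    fderiv ℝ f p x = x.1 * pdx f p + x.2 * pdy f p := by
  have : x = x.1 • ((1, 0) : ℝ × ℝ) + x.2 • ((0, 1) : ℝ × ℝ) := by ext <;> simp
  conv_lhs => rw [this]
  rw [map_add, map_smul, map_smul]
  rfl

lemma exists_primitive (g : ℝ × ℝ → ℝ × ℝ) (hg : ContDiff ℝ (⊤ : ℕ∞) g)
    (hj : ∀ p ∈ disk, jacDet g p = 1) :
    ∃ F : ℝ × ℝ → ℝ, ∀ p ∈ disk, HasFDerivWithinAt F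
      ((1 / 2 : ℝ) • ((g p).1 • fderiv ℝ (fun q => (g q).2) p -
        (g p).2 • fderiv ℝ (fun q => (g q).1) p) -
      (1 / 2 : ℝ) • (p.1 • ContinuousLinearMap.snd ℝ ℝ ℝ - p.2 • ContinuousLinearMap.fst ℝ ℝ ℝ))
      disk p := by
  have hu : ContDiff ℝ (⊤ : ℕ∞) (fun q => (g q).1) := contDiff_fst.comp hg
  have hv : ContDiff ℝ (⊤ : ℕ∞) (fun q => (g q).2) := contDiff_snd.comp hg
  have hu1 : ∀ p, HasFDerivAt (fun q => (g q).1) (fderiv ℝ (fun q => (g q).1) p) p := fun p =>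
    ((hu.differentiable (by simp)) p).hasFDerivAt
  have hv1 : ∀ p, HasFDerivAt (fun q => (g q).2) (fderiv ℝ (fun q => (g q).2) p) p := fun p =>
    ((hv.differentiable (by simp)) p).hasFDerivAt
  have hu2 : ∀ p, HasFDerivAt (fderiv ℝ (fun q => (g q).1))
      (fderiv ℝ (fderiv ℝ (fun q => (g q).1)) p) p := fun p =>
    ((hu.fderiv_right (m := 1) (by norm_cast)).differentiable (by simp) p).hasFDerivAt
  have hv2 : ∀ p, HasFDerivAt (fderiv ℝ (fun q => (g q).2))
      (fderiv ℝ (fderiv ℝ (fun q => (g q).2)) p) p := fun p =>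
    ((hv.fderiv_right (m := 1) (by norm_cast)).differentiable (by simp) p).hasFDerivAt
  have hus := fun p => second_derivative_symmetric hu1 (hu2 p)
  have hvs := fun p => second_derivative_symmetric hv1 (hv2 p)
  refine disk_convex.exists_forall_hasFDerivWithinAt_of_hasFDerivWithinAt_symmetric
    (fun p _ => HasFDerivAt.hasFDerivWithinAt
      (((((hu1 p).smul (hv2 p)).sub ((hv1 p).smul (hu2 p))).const_smul (1/2 : ℝ)).sub
        ((((hasFDerivAt_fst (p := p)).smul_const (ContinuousLinearMap.snd ℝ ℝ ℝ)).sub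
          ((hasFDerivAt_snd (p := p)).smul_const (ContinuousLinearMap.fst ℝ ℝ ℝ))).const_smul
            (1/2 : ℝ)))) ?_
  intro p hp x _ y _
  have h := hj p hp
  simp only [jacDet] at h
  simp only [sub_apply, _root_.add_apply,
    _root_.smul_apply, ContinuousLinearMap.smulRight_apply, smul_eq_mul,
    ContinuousLinearMap.coe_fst', ContinuousLinearMap.coe_snd']
  rw [hus p x y, hvs p x y]
  simp only [fderiv_pd (fun q => (g q).1) p, fderiv_pd (fun q => (g q).2) p]
  linear_combination (x.1 * y.2 - x.2 * y.1) * h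

lemma fderiv_path (f : ℝ × ℝ → ℝ × ℝ) (hf : ContDiff ℝ (⊤ : ℕ∞) f) (c : ℝ → ℝ × ℝ)
    (hc : ContDiff ℝ (⊤ : ℕ∞) c) (t : ℝ) :
    fderiv ℝ (fun q => (f q).1) (c t) (deriv c t) = (deriv (fun s => f (c s)) t).1 ∧
    fderiv ℝ (fun q => (f q).2) (c t) (deriv c t) = (deriv (fun s => f (c s)) t).2 := by
  have h1 := ((hf.differentiable (by simp)) (c t)).hasFDerivAt
  have h2 := ((hc.differentiable (by simp)) t).hasDerivAt
  have h3 := (h1.comp_hasDerivAt t h2).deriv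
  have h4 : deriv (fun s => f (c s)) t = fderiv ℝ f (c t) (deriv c t) := h3
  rw [h4, h1.fst.fderiv, h1.snd.fderiv]
  simp

lemma sigmaPath_eq (f : ℝ × ℝ → ℝ × ℝ) (hf : ContDiff ℝ (⊤ : ℕ∞) f) (c : ℝ → ℝ × ℝ)
    (hc : ContDiff ℝ (⊤ : ℕ∞) c) :
    sigmaPath c f = ∫ t in (0:ℝ)..1, (wdg (fun s => f (c s)) t - wdg c t) := by
  unfold sigmaPath wdg
  congr 1
  ext t
  rw [(fderiv_path f hf c hc t).1, (fderiv_path f hf c hc t).2]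

lemma wdg_cont (c : ℝ → ℝ × ℝ) (hc : ContDiff ℝ (⊤ : ℕ∞) c) : Continuous (wdg c) := by
  have h1 := hc.continuous
  have h2 : Continuous (deriv c) := hc.continuous_deriv (by simp)
  unfold wdg
  fun_prop

lemma primitive_path (g : ℝ × ℝ → ℝ × ℝ) (hg : ContDiff ℝ (⊤ : ℕ∞) g) (F : ℝ × ℝ → ℝ)
    (hF : ∀ p ∈ disk, HasFDerivWithinAt F
      ((1 / 2 : ℝ) • ((g p).1 • fderiv ℝ (fun q => (g q).2) p -
        (g p).2 • fderiv ℝ (fun q => (g q).1) p) -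
      (1 / 2 : ℝ) • (p.1 • ContinuousLinearMap.snd ℝ ℝ ℝ - p.2 • ContinuousLinearMap.fst ℝ ℝ ℝ))
      disk p) (c : ℝ → ℝ × ℝ) (hc : ContDiff ℝ (⊤ : ℕ∞) c) (s : Set ℝ) (hs : MapsTo c s disk)
    (t : ℝ) (ht : t ∈ s) :
    HasDerivWithinAt (fun r => F (c r)) (wdg (fun r => g (c r)) t - wdg c t) s t := by
  have h2 := ((hc.differentiable (by simp)) t).hasDerivAt
  have := (hF (c t) (hs ht)).comp_hasDerivWithinAt t h2.hasDerivWithinAt hs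
  convert! this using 1
  simp only [wdg, _root_.sub_apply,
    _root_.smul_apply, smul_eq_mul,
    ContinuousLinearMap.coe_fst', ContinuousLinearMap.coe_snd']
  rw [(fderiv_path g hg c hc t).1, (fderiv_path g hg c hc t).2]

lemma primitive_int (g : ℝ × ℝ → ℝ × ℝ) (hg : ContDiff ℝ (⊤ : ℕ∞) g) (F : ℝ × ℝ → ℝ)
    (hF : ∀ p ∈ disk, HasFDerivWithinAt F
      ((1 / 2 : ℝ) • ((g p).1 • fderiv ℝ (fun q => (g q).2) p -
        (g p).2 • fderiv ℝ (fun q => (g q).1) p) -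
      (1 / 2 : ℝ) • (p.1 • ContinuousLinearMap.snd ℝ ℝ ℝ - p.2 • ContinuousLinearMap.fst ℝ ℝ ℝ))
      disk p) (c : ℝ → ℝ × ℝ) (hc : ContDiff ℝ (⊤ : ℕ∞) c)
    (hs : MapsTo c (Icc (0:ℝ) 1) disk) :
    ∫ t in (0:ℝ)..1, (wdg (fun r => g (c r)) t - wdg c t) = F (c 1) - F (c 0) := by
  have h := primitive_path g hg F hF c hc _ hs
  refine intervalIntegral.integral_eq_sub_of_hasDerivAt_of_le (f := fun r => F (c r)) zero_le_one
    (fun t ht => (h t ht).continuousWithinAt)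
    (fun t ht => (h t (Ioo_subset_Icc_self ht)).hasDerivAt (Icc_mem_nhds ht.1 ht.2))
    (Continuous.intervalIntegrable ?_ _ _)
  exact (wdg_cont _ (hg.comp hc)).sub (wdg_cont _ hc)

lemma sigmaPath_iter (g : ℝ × ℝ → ℝ × ℝ) (hg : ContDiff ℝ (⊤ : ℕ∞) g) (hgD : MapsTo g disk disk)
    (hg0 : g (0, 0) = (0, 0)) (F : ℝ × ℝ → ℝ)
    (hF : ∀ p ∈ disk, HasFDerivWithinAt F
      ((1 / 2 : ℝ) • ((g p).1 • fderiv ℝ (fun q => (g q).2) p -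
        (g p).2 • fderiv ℝ (fun q => (g q).1) p) -
      (1 / 2 : ℝ) • (p.1 • ContinuousLinearMap.snd ℝ ℝ ℝ - p.2 • ContinuousLinearMap.fst ℝ ℝ ℝ))
      disk p) (c : ℝ → ℝ × ℝ) (hc : ContDiff ℝ (⊤ : ℕ∞) c) (hc0 : c 0 = (0, 0))
    (hs : MapsTo c (Icc (0:ℝ) 1) disk) (n : ℕ) :
    sigmaPath c g^[n] = ∑ k ∈ Finset.range n, (F (g^[k] (c 1)) - F (0, 0)) := by
  have hn : ∀ n, ContDiff ℝ (⊤ : ℕ∞) g^[n] := fun n => by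
    induction n with
    | zero => exact contDiff_id
    | succ n ih => rw [Function.iterate_succ']; exact hg.comp ih
  induction n with
  | zero =>
    rw [sigmaPath_eq _ (hn 0) c hc]
    simp
  | succ n ih =>
    have hcn : ContDiff ℝ (⊤ : ℕ∞) (fun s => g^[n] (c s)) := (hn n).comp hc
    have h := primitive_int g hg F hF (fun s => g^[n] (c s)) hcn
      (fun t ht => (hgD.iterate n) (hs ht))
    rw [Finset.sum_range_succ, ← ih, sigmaPath_eq _ (hn n) c hc, sigmaPath_eq _ (hn (n+1)) c hc]
    have h0 : g^[n] (c 0) = (0, 0) := by rw [hc0]; exact Function.iterate_fixed hg0 n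
    simp only [h0] at h
    rw [← h, ← intervalIntegral.integral_add]
    · congr 1
      ext t
      simp only [Function.iterate_succ_apply']
      ring
    · exact ((wdg_cont _ hcn).sub (wdg_cont _ hc)).intervalIntegrable _ _
    · exact ((wdg_cont _ (hg.comp hcn)).sub (wdg_cont _ hcn)).intervalIntegrable _ _

lemma sigmaQ_eq (f : ℝ × ℝ → ℝ × ℝ) :
    sigmaQ f = sigmaPath (fun t => (t, 0)) f := by
  unfold sigmaQ sigmaPath
  rw [← intervalIntegral.integral_const_mul]
  congr 1
  ext t
  have : deriv (fun t : ℝ => (t, (0:ℝ))) t = (1, 0) :=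
    ((hasDerivAt_id t).prodMk (hasDerivAt_const t (0:ℝ))).deriv
  rw [this]
  simp [pdx]

lemma lt_interior {q : ℝ × ℝ} (hq : q.1 ^ 2 + q.2 ^ 2 < 1) : disk ∈ 𝓝 q := by
  have : {p : ℝ × ℝ | p.1 ^ 2 + p.2 ^ 2 < 1} ∈ 𝓝 q :=
    (isOpen_lt (by fun_prop) (by fun_prop)).mem_nhds hq
  filter_upwards [this] with p hp using le_of_lt hp

lemma bdry_not_nhds {q : ℝ × ℝ} (hq : q ∈ bdry) : disk ∉ 𝓝 q := by
  intro h
  have h1 : Tendsto (fun t : ℝ => t • q) (𝓝[>] 1) (𝓝 q) := by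
    have : Continuous (fun t : ℝ => t • q) := by fun_prop
    have := (this.tendsto 1).mono_left (nhdsWithin_le_nhds (s := Ioi (1:ℝ)))
    simpa using this
  obtain ⟨t, ht, ht1⟩ := ((h1.eventually h).and self_mem_nhdsWithin).exists
  have ht : (t * q.1)^2 + (t * q.2)^2 ≤ 1 := ht
  have hq : q.1 ^ 2 + q.2 ^ 2 = 1 := hq
  have : (1:ℝ) < t := ht1
  have h5 : (t * q.1)^2 + (t * q.2)^2 = t ^ 2 := by linear_combination t ^ 2 * hq
  nlinarith

lemma map_bdry (g : ℝ × ℝ → ℝ × ℝ) (hg : IsSymp g) : MapsTo g bdry bdry := by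
  obtain ⟨hg, hgD, -, g', hg', hgD', h1, h2⟩ := hg
  intro p hp
  have hpD : p ∈ disk := le_of_eq hp
  by_contra hb
  have hlt : (g p).1 ^ 2 + (g p).2 ^ 2 < 1 := lt_of_le_of_ne (hgD hpD) hb
  have hn := lt_interior hlt
  have hd' : HasStrictFDerivAt g' (fderiv ℝ g' (g p)) (g p) :=
    hg'.contDiffAt.hasStrictFDerivAt (by simp)
  have hd : HasFDerivAt g (fderiv ℝ g p) (g' (g p)) := by
    rw [h1 p hpD]; exact ((hg.differentiable (by simp)) p).hasFDerivAt
  have hcomp := hd.comp (g p) hd'.hasFDerivAt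
  have hid : HasFDerivAt (g ∘ g') (ContinuousLinearMap.id ℝ (ℝ × ℝ)) (g p) := by
    refine (hasFDerivAt_id (g p)).congr_of_eventuallyEq ?_
    filter_upwards [hn] with q hq using h2 q hq
  have heq := hcomp.unique hid
  have hinj : Injective (fderiv ℝ g' (g p)).toLinearMap := by
    intro x y hxy
    have hx := congrArg (fun L => L x) heq
    have hy := congrArg (fun L => L y) heq
    simp only [ContinuousLinearMap.comp_apply, ContinuousLinearMap.id_apply] at hx hy
    rw [← hx, ← hy]
    exact congrArg _ hxy
  have hsurj := LinearMap.injective_iff_surjective.1 hinj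
  have hmap := hd'.map_nhds_eq_of_surj (LinearMap.range_eq_top.2 hsurj)
  rw [h1 p hpD] at hmap
  refine bdry_not_nhds hp ?_
  rw [← hmap, Filter.mem_map]
  filter_upwards [hn] with q hq using hgD' hq

lemma exists_angle {w : ℝ × ℝ} (hw : w ∈ bdry) : ∃ c : ℝ, w = (cos c, sin c) := by
  have hw : w.1 ^ 2 + w.2 ^ 2 = 1 := hw
  have hn : ‖(⟨w.1, w.2⟩ : ℂ)‖ = 1 := by
    rw [Complex.norm_def, Complex.normSq_mk, ← sq, ← sq, hw, Real.sqrt_one]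
  refine ⟨Complex.arg ⟨w.1, w.2⟩, ?_⟩
  have h0 : (⟨w.1, w.2⟩ : ℂ) ≠ 0 := by
    intro h; rw [h] at hn; simp at hn
  rw [Complex.cos_arg h0, Complex.sin_arg, hn]
  simp

/-- existence of the lift -/
lemma exists_lift (g : ℝ × ℝ → ℝ × ℝ) (hg : IsSymp g) (F : ℝ × ℝ → ℝ)
    (hF : ∀ p ∈ disk, HasFDerivWithinAt F
      ((1 / 2 : ℝ) • ((g p).1 • fderiv ℝ (fun q => (g q).2) p -
        (g p).2 • fderiv ℝ (fun q => (g q).1) p) -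
      (1 / 2 : ℝ) • (p.1 • ContinuousLinearMap.snd ℝ ℝ ℝ - p.2 • ContinuousLinearMap.fst ℝ ℝ ℝ))
      disk p) :
    ∃ (C : ℝ) (φ : ℝ → ℝ), Continuous φ ∧
      (∀ θ, φ θ = θ + 2 * F (cos θ, sin θ) + C) ∧
      ∀ θ, g (cos θ, sin θ) = (cos (φ θ), sin (φ θ)) := by
  set e : ℝ → ℝ × ℝ := fun θ => (cos θ, sin θ) with he
  have heb : ∀ θ, e θ ∈ bdry := fun θ => by simp [he, bdry]
  have hec : ContDiff ℝ (⊤ : ℕ∞) e := contDiff_cos.prodMk contDiff_sin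
  have hF1 := fun t => (primitive_path g hg.1 F hF e hec univ
    (fun t _ => le_of_eq (heb t)) t (mem_univ t)).hasDerivAt univ_mem
  set w : ℝ → ℝ × ℝ := fun θ => g (e θ) with hw
  have hwb : ∀ θ, (w θ).1 ^ 2 + (w θ).2 ^ 2 = 1 := fun θ => map_bdry g hg (heb θ)
  have hwc : ContDiff ℝ (⊤ : ℕ∞) w := hg.1.comp hec
  have hwd : ∀ t, HasDerivAt w (deriv w t) t := fun t =>
    ((hwc.differentiable (by simp)) t).hasDerivAt
  have hw1 : ∀ t, HasDerivAt (fun t => (w t).1) (deriv w t).1 t := fun t => 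
    (hasFDerivAt_fst (p := w t) (𝕜 := ℝ)).comp_hasDerivAt t (hwd t)
  have hw2 : ∀ t, HasDerivAt (fun t => (w t).2) (deriv w t).2 t := fun t => 
    (hasFDerivAt_snd (p := w t) (𝕜 := ℝ)).comp_hasDerivAt t (hwd t)
  have hwe : ∀ t, wdg e t = 1 / 2 := fun t => by
    have : deriv e t = (- sin t, cos t) := ((hasDerivAt_cos t).prodMk (hasDerivAt_sin t)).deriv
    simp only [wdg, this]
    simp only [he]
    linear_combination (1/2) * (sin_sq_add_cos_sq t)
  set ψ : ℝ → ℝ := fun t => t + 2 * F (e t) with hψ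
  have hψd : ∀ t, HasDerivAt ψ ((w t).1 * (deriv w t).2 - (w t).2 * (deriv w t).1) t := fun t => by
    have := (hasDerivAt_id t).add ((hF1 t).const_mul 2)
    convert! this using 1
    rw [hwe]; simp only [wdg]; ring
  have hort : ∀ t, (w t).1 * (deriv w t).1 + (w t).2 * (deriv w t).2 = 0 := fun t => by
    have h1 := ((hw1 t).pow 2).add ((hw2 t).pow 2)
    have h2 : HasDerivAt (fun t => (w t).1 ^ 2 + (w t).2 ^ 2) 0 t := by
      simp only [hwb]; exact hasDerivAt_const t 1
    have := h1.unique h2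
    simp at this
    linarith
  -- constants
  set A : ℝ → ℝ := fun t => (w t).1 * cos (ψ t) + (w t).2 * sin (ψ t) with hA
  set B : ℝ → ℝ := fun t => (w t).2 * cos (ψ t) - (w t).1 * sin (ψ t) with hB
  have hAd : ∀ t, HasDerivAt A 0 t := fun t => by
    have := ((hw1 t).mul (hψd t).cos).add ((hw2 t).mul (hψd t).sin)
    convert! this using 1
    have h1 := hwb t
    have h2 := hort t
    set a := (w t).1; set b := (w t).2; set a' := (deriv w t).1; set b' := (deriv w t).2
    linear_combination (a' * cos (ψ t) + b' * sin (ψ t)) * h1 -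
      (a * cos (ψ t) + b * sin (ψ t)) * h2
  have hBd : ∀ t, HasDerivAt B 0 t := fun t => by
    have := ((hw2 t).mul (hψd t).cos).sub ((hw1 t).mul (hψd t).sin)
    convert! this using 1
    have h1 := hwb t
    have h2 := hort t
    set a := (w t).1; set b := (w t).2; set a' := (deriv w t).1; set b' := (deriv w t).2
    linear_combination (b' * cos (ψ t) - a' * sin (ψ t)) * h1 -
      (b * cos (ψ t) - a * sin (ψ t)) * h2
  have hAc : ∀ t, A t = A 0 := fun t =>
    is_const_of_deriv_eq_zero (fun t => (hAd t).differentiableAt) (fun t => (hAd t).deriv) t 0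
  have hBc : ∀ t, B t = B 0 := fun t =>
    is_const_of_deriv_eq_zero (fun t => (hBd t).differentiableAt) (fun t => (hBd t).deriv) t 0
  have hAB : (A 0, B 0) ∈ bdry := by
    show A 0 ^ 2 + B 0 ^ 2 = 1
    simp only [hA, hB]
    linear_combination hwb 0 + ((w 0).1 ^ 2 + (w 0).2 ^ 2) * (sin_sq_add_cos_sq (ψ 0))
  obtain ⟨C, hC⟩ := exists_angle hAB
  have hCA : A 0 = cos C := congrArg Prod.fst hC
  have hCB : B 0 = sin C := congrArg Prod.snd hC
  refine ⟨C, fun t => ψ t + C, ?_, fun t => rfl, fun t => ?_⟩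
  · have : Continuous ψ := continuous_iff_continuousAt.2 fun t => (hψd t).continuousAt
    fun_prop
  · show w t = _
    have h3 := hAc t
    have h4 := hBc t
    rw [hCA] at h3; rw [hCB] at h4
    simp only [hA, hB] at h3 h4
    have hs := sin_sq_add_cos_sq (ψ t)
    ext
    · show (w t).1 = cos (ψ t + C)
      rw [cos_add, ← h3, ← h4]
      linear_combination (-(w t).1) * hs
    · show (w t).2 = sin (ψ t + C)
      rw [sin_add, ← h3, ← h4]
      linear_combination (-(w t).2) * hs

lemma lift_mono (g : ℝ × ℝ → ℝ × ℝ) (hg : IsSymp g) (F : ℝ × ℝ → ℝ) (C : ℝ) (φ : ℝ → ℝ)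
    (hφc : Continuous φ) (hφ : ∀ θ, φ θ = θ + 2 * F (cos θ, sin θ) + C)
    (hgφ : ∀ θ, g (cos θ, sin θ) = (cos (φ θ), sin (φ θ))) : Monotone φ := by
  obtain ⟨-, -, -, g', -, -, h1, -⟩ := hg
  have hinj : Injective φ := by
    intro a b hab
    have hD : ∀ θ : ℝ, (cos θ, sin θ) ∈ disk := fun θ => by simp [disk]
    have h := h1 _ (hD a)
    rw [hgφ, hab, ← hgφ, h1 _ (hD b)] at h
    have := hφ a
    rw [hab, hφ b, h] at this
    linarith
  rcases hφc.strictMono_of_inj hinj with h | h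
  · exact h.monotone
  · exfalso
    have h2 := h (show (0:ℝ) < 2 * π by positivity)
    have h3 := hφ (2 * π)
    have h4 := hφ 0
    simp only [cos_two_pi, sin_two_pi, cos_zero, sin_zero] at h3 h4
    have := pi_pos
    linarith

/-- for any smooth path `γ` in the disk from the origin to the
boundary and any `g ∈ G_o`, the limit `lim_n σ_γ(gⁿ)/n` exists and coincides
with the value computed with the radial path; i.e. the homogenization `σ̄` is
independent of the choice of path. -/
theorem sigma_homogenization_path_independent
    (γ : ℝ → ℝ × ℝ) (hγ : ContDiff ℝ (⊤ : ℕ∞) γ) (hγ0 : γ 0 = (0, 0))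
    (hγ1 : γ 1 ∈ bdry) (hγD : MapsTo γ (Icc (0:ℝ) 1) disk)
    (g : ℝ × ℝ → ℝ × ℝ) (hg : IsSympO g) :
    ∃ L : ℝ,
      Tendsto (fun n : ℕ => sigmaPath γ g^[n] / (n : ℝ)) atTop (𝓝 L) ∧
      Tendsto (fun n : ℕ => sigmaQ g^[n] / (n : ℝ)) atTop (𝓝 L) := by
  obtain ⟨hgS, hg0⟩ := hg
  have hgc := hgS.1
  have hgD := hgS.2.1
  obtain ⟨F, hF⟩ := exists_primitive g hgc hgS.2.2.1
  obtain ⟨C, φ, hφc, hφ, hgφ⟩ := exists_lift g hgS F hF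
  have hmono := lift_mono g hgS F C φ hφc hφ hgφ
  have hpi := pi_pos
  let f : CircleDeg1Lift :=
    { toFun := fun x => φ (2 * π * x) / (2 * π)
      monotone' := fun x y hxy => by
        have : φ (2 * π * x) ≤ φ (2 * π * y) := hmono (by gcongr)
        show φ (2 * π * x) / (2 * π) ≤ φ (2 * π * y) / (2 * π)
        gcongr
      map_add_one' := fun x => by
        show φ (2 * π * (x + 1)) / (2 * π) = φ (2 * π * x) / (2 * π) + 1
        rw [hφ, hφ, mul_add, mul_one, cos_add_two_pi, sin_add_two_pi]
        field_simp
        ring }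
  have hf : ∀ x, f x = φ (2 * π * x) / (2 * π) := fun x => rfl
  have hfn : ∀ (n : ℕ) x, (f ^ n) x = φ^[n] (2 * π * x) / (2 * π) := by
    intro n
    induction n with
    | zero => intro x; simp
    | succ n ih =>
      intro x
      rw [pow_succ', CircleDeg1Lift.mul_apply, ih, hf, Function.iterate_succ_apply']
      congr 2
      field_simp
  have hgn : ∀ (n : ℕ) θ, g^[n] (cos θ, sin θ) = (cos (φ^[n] θ), sin (φ^[n] θ)) := by
    intro n θ
    induction n with
    | zero => rfl
    | succ n ih => rw [Function.iterate_succ_apply', ih, hgφ, Function.iterate_succ_apply']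
  have key : ∀ c : ℝ → ℝ × ℝ, ContDiff ℝ (⊤ : ℕ∞) c → c 0 = (0, 0) → c 1 ∈ bdry →
      MapsTo c (Icc (0:ℝ) 1) disk →
      Tendsto (fun n : ℕ => sigmaPath c g^[n] / (n : ℝ)) atTop
        (𝓝 (π * CircleDeg1Lift.translationNumber f - (C / 2 + F (0, 0)))) := by
    intro c hc hc0 hc1 hcD
    obtain ⟨θ, hθ⟩ := exists_angle hc1
    have h1 : ∀ n : ℕ, sigmaPath c g^[n] = (φ^[n] θ - θ) / 2 - n * (C / 2 + F (0, 0)) := by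
      intro n
      rw [sigmaPath_iter g hgc hgD hg0 F hF c hc hc0 hcD n, hθ]
      induction n with
      | zero => simp
      | succ n ih =>
        rw [Finset.sum_range_succ, ih, hgn, Function.iterate_succ_apply']
        have := hφ (φ^[n] θ)
        push_cast
        linarith
    have h2 := ((f.tendsto_translationNumber (θ / (2 * π))).const_mul π).sub_const
      (C / 2 + F (0, 0))
    refine h2.congr' ?_
    filter_upwards [eventually_gt_atTop 0] with n hn
    have hn' : (n : ℝ) ≠ 0 := by positivity
    rw [h1, hfn, mul_div_cancel₀ _ (by positivity : (2 * π) ≠ 0)]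
    field_simp
  refine ⟨_, key γ hγ hγ0 hγ1 hγD, ?_⟩
  simp only [sigmaQ_eq]
  refine key _ (contDiff_id.prodMk contDiff_const) rfl (by simp [bdry]) ?_
  intro t ht
  show t ^ 2 + (0:ℝ) ^ 2 ≤ 1
  nlinarith [ht.1, ht.2]
end
end
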